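/- Fix α ∈ ℝ and let f(s, L) = 2πα + γ_E + log(s/2) − K₀(sL) and g(s, L) = 2πα + γ_E + log(s/2) + K₀(sL) for s, L > 0, where K₀ is the modified Bessel function of the second kind and γ_E the Euler constant. Then: (a) ∂f/∂s = 1/s + L K₁(sL) > 0 and ∂f/∂L = s K₁(sL) > 0; (b) ∂g/∂s = 1/s − L K₁(sL) > 0 and ∂g/∂L = −s K₁(sL) < 0; (c) for each L > 0 the equation f(s, L) = 0 has a unique positive solution s₁(L), with s₁(L) → ∞ as L → 0⁺ and s₁(L) → 2e^{−2πα−γ_E} as L → ∞; (d) g(s, L) = 0 has no positive solution for L ≤ e^{2πα} and a unique positive solution s₂(L) for L > e^{2πα}, with s₂(L) → 0 as L → e^{2πα}⁺ and s₂(L) → 2e^{−2πα−γ_E} as L → ∞. -/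

import Mathlib

open Set Filter Topology Real

noncomputable section

/-- The modified Bessel function of the second kind `K₀`, via the integral
representation `K₀(z) = ∫₁^∞ e^{−zt}(t²−1)^{−1/2} dt`. -/
def K0 (z : ℝ) : ℝ := ∫ t in Set.Ioi (1 : ℝ), Real.exp (-z * t) * (t ^ 2 - 1) ^ (-(1 : ℝ) / 2)

/-- The modified Bessel function of the second kind `K₁`, via the integral
representation `K₁(z) = z ∫₁^∞ e^{−zt}(t²−1)^{1/2} dt`. -/
def K1 (z : ℝ) : ℝ := z * ∫ t in Set.Ioi (1 : ℝ), Real.exp (-z * t) * (t ^ 2 - 1) ^ ((1 : ℝ) / 2)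

/-- `f(s,L) = 2πα + γ_E + log(s/2) − K₀(sL)`. -/
def fα (α s L : ℝ) : ℝ :=
  2 * π * α + eulerMascheroniConstant + Real.log (s / 2) - K0 (s * L)

/-- `g(s,L) = 2πα + γ_E + log(s/2) + K₀(sL)`. -/
def gα (α s L : ℝ) : ℝ :=
  2 * π * α + eulerMascheroniConstant + Real.log (s / 2) + K0 (s * L)

open MeasureTheory

lemma rp_neg {t : ℝ} (ht : 1 < t) : (t ^ 2 - 1) ^ (-(1 : ℝ) / 2) = (√(t ^ 2 - 1))⁻¹ := by
  rw [Real.sqrt_eq_rpow, ← Real.rpow_neg (by nlinarith)]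
  norm_num

lemma K0_eq (z : ℝ) : K0 z = ∫ t in Ioi (1 : ℝ), Real.exp (-z * t) * (√(t ^ 2 - 1))⁻¹ := by
  unfold K0
  refine setIntegral_congr_fun measurableSet_Ioi fun t ht => ?_
  simp only [rp_neg ht]

lemma K1_eq (z : ℝ) : K1 z = z * ∫ t in Ioi (1 : ℝ), Real.exp (-z * t) * √(t ^ 2 - 1) := by
  unfold K1
  simp only [Real.sqrt_eq_rpow]

lemma q_pos {t : ℝ} (ht : 1 < t) : 0 < √(t ^ 2 - 1) := Real.sqrt_pos.2 (by nlinarith)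

lemma q_le {t : ℝ} (ht : 1 < t) : √(t ^ 2 - 1) ≤ t :=
  Real.sqrt_le_iff.2 ⟨by linarith, by linarith⟩

lemma int_shift (f : ℝ → ℝ) (hf : IntegrableOn f (Ioi 0)) :
    IntegrableOn (fun t => f (t - 1)) (Ioi 1) := by
  have h := (integrable_indicator_iff (measurableSet_Ioi (a := (0 : ℝ)))).2 hf
  have h2 := h.comp_sub_right 1
  rw [← integrable_indicator_iff measurableSet_Ioi]
  refine h2.congr (Eventually.of_forall fun t => ?_)
  simp [indicator]

lemma int_tq {z : ℝ} (hz : 0 < z) :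
    IntegrableOn (fun t : ℝ => Real.exp (-z * t) * (t * (√(t ^ 2 - 1))⁻¹)) (Ioi 1) := by
  have h1 := integrableOn_rpow_mul_exp_neg_mul_rpow (p := 1) (s := -1/2) (b := z) (by norm_num) one_pos hz
  have h0 := integrableOn_rpow_mul_exp_neg_mul_rpow (p := 1) (s := 0) (b := z) (by norm_num) one_pos hz
  have h := (int_shift _ h1).add (int_shift _ h0)
  refine Integrable.mono' h ?_ ?_
  · refine Measurable.aestronglyMeasurable (by fun_prop)
  · refine (ae_restrict_mem measurableSet_Ioi).mono fun t ht => ?_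
    have ht : 1 < t := ht
    have hp : 0 < t - 1 := by linarith
    have hq := q_pos ht
    rw [Real.norm_of_nonneg (by positivity)]
    simp only [Pi.add_apply, Real.rpow_one, Real.rpow_zero]
    rw [← add_mul, mul_comm]
    have e : (t - 1) ^ (-1 / 2 : ℝ) = (√(t - 1))⁻¹ := by
      rw [Real.sqrt_eq_rpow, ← Real.rpow_neg hp.le]; norm_num
    rw [e]
    have hs := Real.sqrt_pos.2 hp
    have key : t * (√(t ^ 2 - 1))⁻¹ ≤ (√(t - 1))⁻¹ + 1 := by
      rw [← div_eq_mul_inv, div_le_iff₀ hq]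
      have : √(t ^ 2 - 1) = √(t - 1) * √(t + 1) := by
        rw [← Real.sqrt_mul hp.le]; ring_nf
      rw [this]
      have h3 : ((√(t - 1))⁻¹ + 1) * (√(t - 1) * √(t + 1)) = (1 + √(t - 1)) * √(t + 1) := by
        field_simp
      rw [h3]
      have h4 : √(t+1) ^ 2 = t + 1 := Real.sq_sqrt (by linarith)
      have h5 : √(t-1) ^ 2 = t - 1 := Real.sq_sqrt (by linarith)
      have h6 : 0 < √(t+1) := Real.sqrt_pos.2 (by linarith)
      refine (sq_le_sq₀ (by linarith) (by positivity)).1 ?_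
      rw [mul_pow, h4]
      nlinarith
    refine mul_le_mul key (Real.exp_le_exp.2 (by nlinarith)) (by positivity) (by positivity)

lemma int_q_inv {z : ℝ} (hz : 0 < z) :
    IntegrableOn (fun t : ℝ => Real.exp (-z * t) * (√(t ^ 2 - 1))⁻¹) (Ioi 1) := by
  refine Integrable.mono' (int_tq hz) (Measurable.aestronglyMeasurable (by fun_prop)) ?_
  refine (ae_restrict_mem measurableSet_Ioi).mono fun t ht => ?_
  have ht : 1 < t := ht
  have hq := q_pos ht
  rw [Real.norm_of_nonneg (by positivity)]
  have : (√(t ^ 2 - 1))⁻¹ ≤ t * (√(t ^ 2 - 1))⁻¹ := le_mul_of_one_le_left (by positivity) ht.le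
  gcongr

lemma int_id {z : ℝ} (hz : 0 < z) :
    IntegrableOn (fun t : ℝ => Real.exp (-z * t) * t) (Ioi 0) := by
  have h1 := integrableOn_rpow_mul_exp_neg_mul_rpow (p := 1) (s := 1) (b := z) (by norm_num) one_pos hz
  simpa [mul_comm] using h1

lemma int_id1 {z : ℝ} (hz : 0 < z) :
    IntegrableOn (fun t : ℝ => Real.exp (-z * t) * t) (Ioi 1) :=
  (int_id hz).mono_set (Ioi_subset_Ioi zero_le_one)

lemma int_q {z : ℝ} (hz : 0 < z) :
    IntegrableOn (fun t : ℝ => Real.exp (-z * t) * √(t ^ 2 - 1)) (Ioi 1) := by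
  refine Integrable.mono' (int_id1 hz) (Measurable.aestronglyMeasurable (by fun_prop)) ?_
  refine (ae_restrict_mem measurableSet_Ioi).mono fun t ht => ?_
  rw [Real.norm_of_nonneg (by positivity)]
  have := q_le ht
  gcongr

lemma tendsto_exp_id {z : ℝ} (hz : 0 < z) :
    Tendsto (fun t : ℝ => Real.exp (-z * t) * t) atTop (𝓝 0) := by
  have := tendsto_rpow_mul_exp_neg_mul_atTop_nhds_zero 1 z hz
  simpa [mul_comm] using this

lemma ibp1 {z : ℝ} (hz : 0 < z) :
    ∫ t in Ioi (1 : ℝ), Real.exp (-z * t) * (t * (√(t ^ 2 - 1))⁻¹) = K1 z := by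
  have h := integral_Ioi_of_hasDerivAt_of_tendsto (a := (1 : ℝ)) (m := 0)
    (f := fun t => Real.exp (-z * t) * √(t ^ 2 - 1))
    (f' := fun t => Real.exp (-z * t) * (t * (√(t ^ 2 - 1))⁻¹)
      - z * (Real.exp (-z * t) * √(t ^ 2 - 1)))
    (by fun_prop) ?_ ((int_tq hz).sub ((int_q hz).const_mul z)) ?_
  · rw [integral_sub (int_tq hz) ((int_q hz).const_mul z), integral_const_mul] at h
    rw [K1_eq]
    simp at h
    simp
    linarith
  · intro t ht
    have ht : 1 < t := ht
    have hq := q_pos ht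
    have h1 : HasDerivAt (fun t : ℝ => Real.exp (-z * t)) (Real.exp (-z * t) * (-z * 1)) t :=
      ((hasDerivAt_id t).const_mul (-z)).exp
    have h2 : HasDerivAt (fun t : ℝ => √(t ^ 2 - 1)) ((2 * t) / (2 * √(t ^ 2 - 1))) t := by
      have : HasDerivAt (fun t : ℝ => t ^ 2 - 1) (2 * t) t := by
        simpa using (hasDerivAt_pow 2 t).sub_const 1
      exact this.sqrt (by nlinarith)
    refine (h1.mul h2).congr_deriv ?_
    field_simp
    ring
  · refine tendsto_of_tendsto_of_tendsto_of_le_of_le' tendsto_const_nhds (tendsto_exp_id hz) ?_ ?_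
    · exact Eventually.of_forall fun t => by positivity
    · filter_upwards [eventually_gt_atTop 1] with t ht
      have := q_le ht
      gcongr

lemma K0_deriv {z : ℝ} (hz : 0 < z) : HasDerivAt K0 (-K1 z) z := by
  have hs : Ioi (z / 2) ∈ 𝓝 z := Ioi_mem_nhds (by linarith)
  have h := hasDerivAt_integral_of_dominated_loc_of_deriv_le (μ := volume.restrict (Ioi (1 : ℝ)))
    (F := fun w t : ℝ => Real.exp (-w * t) * (√(t ^ 2 - 1))⁻¹)
    (F' := fun w t : ℝ => - (Real.exp (-w * t) * (t * (√(t ^ 2 - 1))⁻¹)))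
    (bound := fun t => Real.exp (-(z / 2) * t) * (t * (√(t ^ 2 - 1))⁻¹))
    hs (Eventually.of_forall fun w => Measurable.aestronglyMeasurable (by fun_prop))
    (int_q_inv hz) (Measurable.aestronglyMeasurable (by fun_prop)) ?_ (int_tq (by linarith)) ?_
  · have h2 := h.2
    rw [integral_neg, ibp1 hz] at h2
    exact h2.congr_of_eventuallyEq (Eventually.of_forall fun w => K0_eq w)
  · refine (ae_restrict_mem measurableSet_Ioi).mono fun t ht w hw => ?_
    have ht : 1 < t := ht
    have hw : z / 2 < w := hw
    have hq := q_pos ht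
    rw [norm_neg, Real.norm_of_nonneg (by positivity)]
    have : -w * t ≤ -(z / 2) * t := by nlinarith
    gcongr
  · refine Eventually.of_forall fun t w _ => ?_
    have h1 : HasDerivAt (fun w : ℝ => Real.exp (-w * t)) (Real.exp (-w * t) * (-1 * t)) w :=
      ((hasDerivAt_id w).neg.mul_const t).exp
    refine (h1.mul_const ((√(t ^ 2 - 1))⁻¹)).congr_deriv ?_
    ring

lemma int_pos_of {f : ℝ → ℝ} (hf : IntegrableOn f (Ioi 1)) (hp : ∀ t, 1 < t → 0 < f t) :
    0 < ∫ t in Ioi (1 : ℝ), f t := by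
  rw [setIntegral_pos_iff_support_of_nonneg_ae _ hf]
  · have : Function.support f ∩ Ioi 1 = Ioi 1 :=
      inter_eq_right.2 fun t ht => (hp t ht).ne'
    rw [this]; simp
  · exact (ae_restrict_mem measurableSet_Ioi).mono fun t ht => (hp t ht).le

lemma K0_pos {z : ℝ} (hz : 0 < z) : 0 < K0 z := by
  rw [K0_eq]
  exact int_pos_of (int_q_inv hz) fun t ht => by have := q_pos ht; positivity

lemma K1_pos {z : ℝ} (hz : 0 < z) : 0 < K1 z := by
  rw [K1_eq]
  exact mul_pos hz (int_pos_of (int_q hz) fun t ht => by have := q_pos ht; positivity)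

lemma int_exp_id {z : ℝ} (hz : 0 < z) :
    ∫ t in Ioi (1 : ℝ), Real.exp (-z * t) * t = Real.exp (-z) * (1 / z + 1 / z ^ 2) := by
  have h := integral_Ioi_of_hasDerivAt_of_tendsto' (a := (1 : ℝ)) (m := 0)
    (f := fun t => -(Real.exp (-z * t) * t) / z - Real.exp (-z * t) / z ^ 2)
    (f' := fun t => Real.exp (-z * t) * t) ?_ (int_id1 hz) ?_
  · rw [h]; simp; ring
  · intro t _
    have h1 : HasDerivAt (fun t : ℝ => Real.exp (-z * t)) (Real.exp (-z * t) * (-z * 1)) t :=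
      ((hasDerivAt_id t).const_mul (-z)).exp
    refine (((h1.mul (hasDerivAt_id t)).neg.div_const z).sub (h1.div_const (z ^ 2))).congr_deriv ?_
    simp
    field_simp
    ring
  · have h1 := tendsto_exp_id hz
    have h2 : Tendsto (fun t : ℝ => Real.exp (-z * t)) atTop (𝓝 0) :=
      Real.tendsto_exp_atBot.comp (tendsto_id.const_mul_atTop_of_neg (by linarith))
    simpa using (h1.neg.div_const z).sub (h2.div_const (z ^ 2))

lemma zK1_lt {z : ℝ} (hz : 0 < z) : z * K1 z < 1 := by
  have h : 0 < ∫ t in Ioi (1 : ℝ), (Real.exp (-z * t) * t - Real.exp (-z * t) * √(t ^ 2 - 1)) := by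
    refine int_pos_of ((int_id1 hz).sub (int_q hz)) fun t ht => ?_
    rw [← mul_sub]
    have : √(t ^ 2 - 1) < t := by
      rw [Real.sqrt_lt' (by linarith)]; linarith
    have := sub_pos.2 this
    positivity
  rw [integral_sub (int_id1 hz) (int_q hz), int_exp_id hz] at h
  rw [K1_eq]
  have h2 : Real.exp (-z) * (1 + z) ≤ 1 := by
    have := Real.add_one_le_exp z
    rw [Real.exp_neg, inv_mul_le_iff₀ (Real.exp_pos z)]; linarith
  have h3 : z * (z * (Real.exp (-z) * (1 / z + 1 / z ^ 2))) = Real.exp (-z) * (1 + z) := by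
    field_simp
    ring
  nlinarith [mul_pos hz (mul_pos hz h)]

lemma K0_tendsto_atTop : Tendsto K0 atTop (𝓝 0) := by
  have hle : ∀ z, 1 ≤ z → K0 z ≤ Real.exp (-(z - 1)) * K0 1 := by
    intro z hz
    rw [K0_eq, K0_eq, ← integral_const_mul]
    refine setIntegral_mono_on (int_q_inv (by linarith)) ((int_q_inv one_pos).const_mul _)
      measurableSet_Ioi fun t ht => ?_
    have ht : 1 < t := ht
    rw [← mul_assoc, ← Real.exp_add]
    have : -z * t ≤ -(z - 1) + -1 * t := by nlinarith
    gcongr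
  have h2 : Tendsto (fun z : ℝ => Real.exp (-(z - 1)) * K0 1) atTop (𝓝 0) := by
    have : Tendsto (fun z : ℝ => Real.exp (-(z - 1))) atTop (𝓝 0) :=
      Real.tendsto_exp_atBot.comp (tendsto_neg_atTop_atBot.comp
        (tendsto_atTop_add_const_right _ (-1) tendsto_id))
    simpa using this.mul_const (K0 1)
  refine tendsto_of_tendsto_of_tendsto_of_le_of_le' tendsto_const_nhds h2 ?_ ?_
  · filter_upwards [eventually_gt_atTop 0] with z hz using (K0_pos hz).le
  · filter_upwards [eventually_ge_atTop 1] with z hz using hle z hz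

lemma abs_log_le' {u : ℝ} (hu : 0 < u) : |Real.log u| ≤ u + 2 * u ^ (-1 / 2 : ℝ) := by
  have h1 := Real.log_le_sub_one_of_pos hu
  have hp : 0 < u ^ (-1 / 2 : ℝ) := Real.rpow_pos_of_pos hu _
  have h2 := Real.log_le_sub_one_of_pos hp
  rw [Real.log_rpow hu] at h2
  rw [abs_le]
  constructor <;> linarith

lemma int_rpow_half : IntegrableOn (fun u : ℝ => Real.exp (-u) * u ^ (-1 / 2 : ℝ)) (Ioi 0) := by
  have h1 := integrableOn_rpow_mul_exp_neg_mul_rpow (p := 1) (s := -1/2) (b := 1)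
    (by norm_num) one_pos one_pos
  simpa [mul_comm] using h1

lemma int_exp0 : IntegrableOn (fun u : ℝ => Real.exp (-u)) (Ioi 0) :=
  integrableOn_exp_neg_Ioi 0

lemma int_logbound : IntegrableOn (fun u : ℝ => Real.exp (-u) *
    (2 * (u + 2 * u ^ (-1 / 2 : ℝ)) + Real.log 2)) (Ioi 0) := by
  have h1 := int_id one_pos
  have h := ((h1.const_mul 2).add (int_rpow_half.const_mul 4)).add (int_exp0.const_mul (Real.log 2))
  refine h.congr (Eventually.of_forall fun u => ?_)
  simp
  ring

lemma int_log : IntegrableOn (fun u : ℝ => Real.exp (-u) * Real.log u) (Ioi 0) := by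
  refine Integrable.mono' int_logbound (Measurable.aestronglyMeasurable (by fun_prop)) ?_
  refine (ae_restrict_mem measurableSet_Ioi).mono fun u hu => ?_
  have hu : 0 < u := hu
  rw [norm_mul, Real.norm_of_nonneg (Real.exp_pos _).le, Real.norm_eq_abs]
  have h := abs_log_le' hu
  have h0 := abs_nonneg (Real.log u)
  have h2 : 0 < Real.log 2 := Real.log_pos (by norm_num)
  gcongr
  linarith

lemma integral_exp_log : ∫ u in Ioi (0 : ℝ), Real.exp (-u) * Real.log u = -eulerMascheroniConstant := by
  have h1 := Complex.hasDerivAt_GammaIntegral (s := 1) (by simp)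
  have h2 := Complex.hasDerivAt_Gamma_one
  have h3 : Complex.Gamma =ᶠ[𝓝 1] Complex.GammaIntegral := by
    have : IsOpen {s : ℂ | 0 < s.re} := isOpen_lt continuous_const Complex.continuous_re
    filter_upwards [this.mem_nhds (show (1 : ℂ) ∈ {s : ℂ | 0 < s.re} by simp)] with s hs
    exact Complex.Gamma_eq_integral hs
  have h4 := h2.unique (h1.congr_of_eventuallyEq h3)
  have h5 : (∫ t : ℝ in Ioi 0, (t : ℂ) ^ ((1 : ℂ) - 1) * (Real.log t * Real.exp (-t)))
      = ((∫ u in Ioi (0 : ℝ), Real.exp (-u) * Real.log u : ℝ) : ℂ) := by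
    rw [← integral_complex_ofReal]
    refine setIntegral_congr_fun measurableSet_Ioi fun t ht => ?_
    simp [mul_comm]
  have h6 : ((∫ u in Ioi (0 : ℝ), Real.exp (-u) * Real.log u : ℝ) : ℂ)
      = ((-eulerMascheroniConstant : ℝ) : ℂ) := by
    rw [← h5, ← h4]; simp
  exact_mod_cast h6

lemma arcosh_le {t : ℝ} (ht : 1 < t) : Real.arcosh t ≤ 2 * t := by
  have h := q_le ht
  unfold Real.arcosh
  have := Real.log_le_sub_one_of_pos (show 0 < t + √(t ^ 2 - 1) by have := q_pos ht; linarith)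
  linarith

lemma meas_arcosh : Measurable Real.arcosh := by
  unfold Real.arcosh; fun_prop

lemma int_arcosh {z : ℝ} (hz : 0 < z) :
    IntegrableOn (fun t : ℝ => Real.exp (-z * t) * Real.arcosh t) (Ioi 1) := by
  refine Integrable.mono' ((int_id1 hz).const_mul 2) (Measurable.aestronglyMeasurable ?_) ?_
  · exact Measurable.mul (by fun_prop) meas_arcosh
  refine (ae_restrict_mem measurableSet_Ioi).mono fun t ht => ?_
  have ht : 1 < t := ht
  have h0 := Real.arcosh_nonneg ht.le
  rw [Real.norm_of_nonneg (by positivity)]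
  have := arcosh_le ht
  calc _ ≤ Real.exp (-z * t) * (2 * t) := by gcongr
    _ = _ := by ring

lemma ibp2 {z : ℝ} (hz : 0 < z) :
    K0 z = z * ∫ t in Ioi (1 : ℝ), Real.exp (-z * t) * Real.arcosh t := by
  have h := integral_Ioi_of_hasDerivAt_of_tendsto (a := (1 : ℝ)) (m := 0)
    (f := fun t => Real.exp (-z * t) * Real.arcosh t)
    (f' := fun t => Real.exp (-z * t) * (√(t ^ 2 - 1))⁻¹
      - z * (Real.exp (-z * t) * Real.arcosh t))
    ?_ ?_ ((int_q_inv hz).sub ((int_arcosh hz).const_mul z)) ?_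
  · rw [integral_sub (int_q_inv hz) ((int_arcosh hz).const_mul z), integral_const_mul] at h
    rw [K0_eq]
    simp at h
    simp
    linarith
  · exact ContinuousWithinAt.mul (by fun_prop) (Real.continuousOn_arcosh 1 (by simp))
  · intro t ht
    have h1 : HasDerivAt (fun t : ℝ => Real.exp (-z * t)) (Real.exp (-z * t) * (-z * 1)) t :=
      ((hasDerivAt_id t).const_mul (-z)).exp
    refine (h1.mul (Real.hasDerivAt_arcosh ht)).congr_deriv ?_
    ring
  · refine tendsto_of_tendsto_of_tendsto_of_le_of_le' tendsto_const_nhds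
      (by simpa using (tendsto_exp_id hz).const_mul 2) ?_ ?_
    · filter_upwards [eventually_gt_atTop 1] with t ht
      have := Real.arcosh_nonneg ht.le
      positivity
    · filter_upwards [eventually_gt_atTop 1] with t ht
      have := arcosh_le ht
      calc _ ≤ Real.exp (-z * t) * (2 * t) := by gcongr
        _ = _ := by ring

/-- Substitution `u = z t`. -/
lemma K0_add_log {z : ℝ} (hz : 0 < z) :
    K0 z + Real.exp (-z) * Real.log z
      = ∫ u in Ioi z, Real.exp (-u) * Real.log (u + √(u ^ 2 - z ^ 2)) := by
  have hsub := integral_comp_mul_left_Ioi'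
    (fun u => Real.exp (-u) * Real.log (u + √(u ^ 2 - z ^ 2))) 1 hz
  rw [mul_one] at hsub
  rw [← hsub, ibp2 hz, smul_eq_mul]
  have hexp : IntegrableOn (fun t : ℝ => Real.exp (-z * t)) (Ioi 1) := integrableOn_exp_mul_Ioi (by linarith) 1
  have hexpi : ∫ t in Ioi (1 : ℝ), Real.exp (-z * t) = Real.exp (-z) / z := by
    rw [integral_exp_mul_Ioi (by linarith) 1]
    field_simp
  have : ∀ t ∈ Ioi (1 : ℝ), Real.exp (-(z * t)) * Real.log (z * t + √((z * t) ^ 2 - z ^ 2))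
      = Real.exp (-z * t) * Real.arcosh t + Real.log z * Real.exp (-z * t) := by
    intro t ht
    have ht : 1 < t := ht
    have hq := q_pos ht
    have e : (z * t) ^ 2 - z ^ 2 = z ^ 2 * (t ^ 2 - 1) := by ring
    rw [e, Real.sqrt_mul (by positivity), Real.sqrt_sq hz.le, ← mul_add,
      Real.log_mul hz.ne' (by positivity), Real.arcosh, neg_mul]
    ring
  rw [setIntegral_congr_fun measurableSet_Ioi this,
    integral_add (int_arcosh hz) (hexp.const_mul _), integral_const_mul, hexpi]
  field_simp

lemma limit_int : Tendsto (fun z : ℝ => ∫ u in Ioi z, Real.exp (-u) * Real.log (u + √(u ^ 2 - z ^ 2)))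
    (𝓝[>] 0) (𝓝 (Real.log 2 - eulerMascheroniConstant)) := by
  have hlim : ∫ u in Ioi (0 : ℝ), Real.exp (-u) * Real.log (u + u)
      = Real.log 2 - eulerMascheroniConstant := by
    have : ∀ u ∈ Ioi (0 : ℝ), Real.exp (-u) * Real.log (u + u)
        = Real.log 2 * Real.exp (-u) + Real.exp (-u) * Real.log u := by
      intro u hu
      have hu : 0 < u := hu
      rw [← two_mul, Real.log_mul two_ne_zero hu.ne']; ring
    rw [setIntegral_congr_fun measurableSet_Ioi this,
      integral_add (int_exp0.const_mul _) int_log, integral_exp_log, integral_const_mul,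
      integral_exp_neg_Ioi_zero]
    ring
  rw [← hlim]
  have h := tendsto_integral_filter_of_dominated_convergence (μ := volume.restrict (Ioi (0 : ℝ)))
    (l := 𝓝[>] (0 : ℝ))
    (F := fun z u => (Ioi z).indicator (fun u => Real.exp (-u) * Real.log (u + √(u ^ 2 - z ^ 2))) u)
    (f := fun u => Real.exp (-u) * Real.log (u + u))
    (fun u : ℝ => Real.exp (-u) * (2 * (u + 2 * u ^ (-1 / 2 : ℝ)) + Real.log 2))
    ?_ ?_ int_logbound ?_
  · refine h.congr' ?_
    filter_upwards [self_mem_nhdsWithin] with z hz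
    have hz : 0 < z := hz
    rw [setIntegral_indicator measurableSet_Ioi, Ioi_inter_Ioi, max_eq_right hz.le]
  · refine Eventually.of_forall fun z => Measurable.aestronglyMeasurable ?_
    exact Measurable.indicator (by fun_prop) measurableSet_Ioi
  · filter_upwards [self_mem_nhdsWithin] with z hz
    have hz : 0 < z := hz
    refine (ae_restrict_mem measurableSet_Ioi).mono fun u hu => ?_
    have hu : 0 < u := hu
    have h2 : 0 < Real.log 2 := Real.log_pos (by norm_num)
    by_cases hzu : z < u
    · rw [indicator_of_mem (show u ∈ Ioi z from hzu), norm_mul,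
        Real.norm_of_nonneg (Real.exp_pos _).le, Real.norm_eq_abs]
      have hs : √(u ^ 2 - z ^ 2) ≤ u := Real.sqrt_le_iff.2 ⟨hu.le, by nlinarith⟩
      have hs0 := Real.sqrt_nonneg (u ^ 2 - z ^ 2)
      have ha : Real.log u ≤ Real.log (u + √(u ^ 2 - z ^ 2)) := Real.log_le_log hu (by linarith)
      have hb : Real.log (u + √(u ^ 2 - z ^ 2)) ≤ Real.log 2 + Real.log u := by
        rw [← Real.log_mul two_ne_zero hu.ne']
        exact Real.log_le_log (by linarith) (by linarith)
      have hc := abs_le.1 (abs_log_le' hu)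
      gcongr
      rw [abs_le]
      constructor <;> linarith
    · rw [indicator_of_notMem (show u ∉ Ioi z from hzu), norm_zero]
      have := Real.rpow_pos_of_pos hu (-1 / 2)
      positivity
  · refine (ae_restrict_mem measurableSet_Ioi).mono fun u hu => ?_
    have hu : 0 < u := hu
    have h1 : Tendsto (fun z : ℝ => Real.exp (-u) * Real.log (u + √(u ^ 2 - z ^ 2))) (𝓝[>] 0)
        (𝓝 (Real.exp (-u) * Real.log (u + u))) := by
      have h3 : ContinuousAt (fun z : ℝ => Real.exp (-u) * Real.log (u + √(u ^ 2 - z ^ 2))) 0 := by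
        refine ContinuousAt.mul (by fun_prop) (ContinuousAt.log (by fun_prop) ?_)
        have := Real.sqrt_nonneg (u ^ 2 - 0 ^ 2)
        positivity
      have h4 := h3.tendsto.mono_left (nhdsWithin_le_nhds (s := Ioi 0))
      simpa [Real.sqrt_sq hu.le] using h4
    refine h1.congr' ?_
    filter_upwards [mem_nhdsWithin_of_mem_nhds (Iio_mem_nhds hu)] with z hz
    rw [indicator_of_mem (show u ∈ Ioi z from hz)]

/-- `H z = K₀(z) + log(z/2) + γ`. -/
def HH (z : ℝ) : ℝ := K0 z + Real.log (z / 2) + eulerMascheroniConstant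

lemma HH_tendsto_zero : Tendsto HH (𝓝[>] 0) (𝓝 0) := by
  have h1 : Tendsto (fun z : ℝ => (1 - Real.exp (-z)) * Real.log z) (𝓝[>] 0) (𝓝 0) := by
    have h2 := tendsto_log_mul_rpow_nhdsGT_zero one_pos
    refine squeeze_zero_norm' ?_ (by simpa using h2.norm)
    filter_upwards [self_mem_nhdsWithin] with z hz
    have hz : 0 < z := hz
    have h3 := Real.add_one_le_exp (-z)
    have h4 : Real.exp (-z) ≤ 1 := Real.exp_le_one_iff.2 (by linarith)
    rw [norm_mul, Real.norm_of_nonneg (by linarith), Real.norm_eq_abs, abs_of_pos hz, mul_comm]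
    gcongr
    linarith
  have h := ((limit_int.add h1).sub_const (Real.log 2)).add_const eulerMascheroniConstant
  have e : Real.log 2 - eulerMascheroniConstant + 0 - Real.log 2 + eulerMascheroniConstant = 0 := by ring
  rw [e] at h
  refine h.congr' ?_
  filter_upwards [self_mem_nhdsWithin] with z hz
  have hz : 0 < z := hz
  rw [← K0_add_log hz, HH, Real.log_div hz.ne' two_ne_zero]
  ring

lemma HH_deriv {z : ℝ} (hz : 0 < z) : HasDerivAt HH (1 / z - K1 z) z := by
  have h1 : HasDerivAt (fun z : ℝ => Real.log (z / 2)) ((1 / 2) / (z / 2)) z :=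
    ((hasDerivAt_id z).div_const 2).log (by simpa using hz.ne')
  refine (((K0_deriv hz).add h1).add_const eulerMascheroniConstant).congr_deriv ?_
  field_simp
  ring

lemma K1_lt {z : ℝ} (hz : 0 < z) : K1 z < 1 / z := by
  rw [lt_div_iff₀ hz, mul_comm]; exact zK1_lt hz

lemma HH_cont : ContinuousOn HH (Ioi 0) := fun _ hz =>
  (HH_deriv hz).continuousAt.continuousWithinAt

lemma HH_mono : StrictMonoOn HH (Ioi 0) := by
  refine strictMonoOn_of_deriv_pos (convex_Ioi 0) HH_cont fun z hz => ?_
  rw [interior_Ioi] at hz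
  rw [(HH_deriv hz).deriv]
  linarith [K1_lt hz]

lemma HH_pos {z : ℝ} (hz : 0 < z) : 0 < HH z := by
  have h1 : 0 ≤ HH (z / 2) := by
    refine le_of_tendsto HH_tendsto_zero ?_
    filter_upwards [Ioo_mem_nhdsGT (half_pos hz)] with w hw
    exact (HH_mono hw.1 (half_pos hz) hw.2).le
  exact h1.trans_lt (HH_mono (half_pos hz) hz (by linarith : z / 2 < z))

lemma HH_tendsto_atTop : Tendsto HH atTop atTop := by
  have h1 : Tendsto (fun z : ℝ => Real.log (z / 2) + eulerMascheroniConstant) atTop atTop :=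
    tendsto_atTop_add_const_right _ _
      (Real.tendsto_log_atTop.comp (tendsto_id.atTop_div_const two_pos))
  refine tendsto_atTop_mono' _ ?_ h1
  filter_upwards [eventually_gt_atTop 0] with z hz
  have := K0_pos hz
  unfold HH; linarith

lemma HH_surj {c : ℝ} (hc : 0 < c) : ∃ z, 0 < z ∧ HH z = c := by
  obtain ⟨a, ha, ha0⟩ := ((HH_tendsto_zero.eventually (Iio_mem_nhds hc)).and
    self_mem_nhdsWithin).exists
  obtain ⟨b, hb, hab⟩ := ((HH_tendsto_atTop.eventually (eventually_gt_atTop c)).and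
    (eventually_gt_atTop a)).exists
  have ha0 : 0 < a := ha0
  have hcont : ContinuousOn HH (Icc a b) := HH_cont.mono fun x hx => ha0.trans_le hx.1
  obtain ⟨z, hz, hzc⟩ := intermediate_value_Icc hab.le hcont ⟨le_of_lt ha, le_of_lt hb⟩
  exact ⟨z, ha0.trans_le hz.1, hzc⟩

lemma g_eq (α : ℝ) {s L : ℝ} (hs : 0 < s) (hL : 0 < L) :
    gα α s L = HH (s * L) - (Real.log L - 2 * π * α) := by
  unfold gα HH
  rw [Real.log_div (by positivity) two_ne_zero, Real.log_div (by positivity) two_ne_zero,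
    Real.log_mul hs.ne' hL.ne']
  ring

lemma K0_tendsto_zero : Tendsto K0 (𝓝[>] 0) atTop := by
  have h1 : Tendsto (fun z : ℝ => Real.log (z / 2)) (𝓝[>] 0) atBot := by
    refine Real.tendsto_log_nhdsGT_zero.comp ?_
    refine tendsto_nhdsWithin_iff.2 ⟨?_, ?_⟩
    · have : ContinuousAt (fun z : ℝ => z / 2) 0 := by fun_prop
      simpa using this.tendsto.mono_left (nhdsWithin_le_nhds (s := Ioi 0))
    · filter_upwards [self_mem_nhdsWithin] with z hz
      exact half_pos (show (0 : ℝ) < z from hz)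
  have h2 := (HH_tendsto_zero.add_const (-eulerMascheroniConstant)).add_atTop
    (tendsto_neg_atBot_atTop.comp h1)
  refine h2.congr fun z => ?_
  simp only [HH, Function.comp]
  ring

lemma tendsto_mul_zero {c : ℝ} (hc : 0 < c) : Tendsto (fun x : ℝ => c * x) (𝓝[>] 0) (𝓝[>] 0) := by
  refine tendsto_nhdsWithin_iff.2 ⟨?_, ?_⟩
  · have : ContinuousAt (fun z : ℝ => c * z) 0 := by fun_prop
    simpa using this.tendsto.mono_left (nhdsWithin_le_nhds (s := Ioi 0))
  · filter_upwards [self_mem_nhdsWithin] with z hz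
    exact mul_pos hc hz

lemma log_half_deriv {s : ℝ} (hs : 0 < s) (c : ℝ) :
    HasDerivAt (fun s : ℝ => c + Real.log (s / 2)) (1 / s) s := by
  have h1 : HasDerivAt (fun z : ℝ => Real.log (z / 2)) ((1 / 2) / (s / 2)) s :=
    ((hasDerivAt_id s).div_const 2).log (by simpa using hs.ne')
  refine (h1.const_add c).congr_deriv ?_
  field_simp

lemma K0_deriv_s {s L : ℝ} (hs : 0 < s) (hL : 0 < L) :
    HasDerivAt (fun σ => K0 (σ * L)) (-(L * K1 (s * L))) s := by
  have h := (K0_deriv (mul_pos hs hL)).comp s ((hasDerivAt_id s).mul_const L)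
  refine h.congr_deriv ?_
  ring

lemma K0_deriv_L {s L : ℝ} (hs : 0 < s) (hL : 0 < L) :
    HasDerivAt (fun Λ => K0 (s * Λ)) (-(s * K1 (s * L))) L := by
  have h := (K0_deriv (mul_pos hs hL)).comp L ((hasDerivAt_id L).const_mul s)
  refine h.congr_deriv ?_
  ring

lemma f_deriv (α : ℝ) {s L : ℝ} (hs : 0 < s) (hL : 0 < L) :
    HasDerivAt (fun σ => fα α σ L) (1 / s + L * K1 (s * L)) s := by
  refine ((log_half_deriv hs _).sub (K0_deriv_s hs hL)).congr_deriv ?_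
  ring

lemma f_cont (α : ℝ) {L : ℝ} (hL : 0 < L) : ContinuousOn (fun σ => fα α σ L) (Ioi 0) :=
  fun _ hs => (f_deriv α hs hL).continuousAt.continuousWithinAt

lemma f_mono (α : ℝ) {L : ℝ} (hL : 0 < L) : StrictMonoOn (fun σ => fα α σ L) (Ioi 0) := by
  refine strictMonoOn_of_deriv_pos (convex_Ioi 0) (f_cont α hL) fun s hs => ?_
  rw [interior_Ioi] at hs
  have hs : 0 < s := hs
  rw [(f_deriv α hs hL).deriv]
  have := K1_pos (mul_pos hs hL)
  positivity

lemma solve_eq (α : ℝ) {s k : ℝ} (hs : 0 < s)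
    (h : 2 * π * α + eulerMascheroniConstant + Real.log (s / 2) + k = 0) :
    s = 2 * Real.exp (-2 * π * α - eulerMascheroniConstant - k) := by
  have : -2 * π * α - eulerMascheroniConstant - k = Real.log (s / 2) := by linarith
  rw [this, Real.exp_log (by positivity)]
  ring

lemma f_exists (α : ℝ) {L : ℝ} (hL : 0 < L) : ∃ s, 0 < s ∧ fα α s L = 0 := by
  set C := 2 * π * α + eulerMascheroniConstant with hC
  have h0 : Tendsto (fun s : ℝ => K0 (L * s)) (𝓝[>] 0) atTop :=
    K0_tendsto_zero.comp (tendsto_mul_zero hL)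
  have h1 : Tendsto (fun s : ℝ => K0 (L * s)) atTop (𝓝 0) :=
    K0_tendsto_atTop.comp (tendsto_id.const_mul_atTop hL)
  have h2 : Tendsto (fun s : ℝ => Real.log (s / 2)) atTop atTop :=
    Real.tendsto_log_atTop.comp (tendsto_id.atTop_div_const two_pos)
  obtain ⟨a, ⟨ha, ha0⟩, ha2⟩ := (((h0.eventually (eventually_gt_atTop C)).and
    self_mem_nhdsWithin).and (mem_nhdsWithin_of_mem_nhds (Iio_mem_nhds two_pos))).exists
  obtain ⟨b, ⟨hb1, hb2⟩, hab⟩ := (((h1.eventually (Iio_mem_nhds one_pos)).and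
    (h2.eventually (eventually_gt_atTop (1 - C)))).and (eventually_gt_atTop a)).exists
  have ha0 : 0 < a := ha0
  have ha2 : a < 2 := ha2
  have hb1 : K0 (L * b) < 1 := hb1
  have hla : Real.log (a / 2) < 0 := Real.log_neg (by positivity) (by linarith)
  have hcont : ContinuousOn (fun σ => fα α σ L) (Icc a b) :=
    (f_cont α hL).mono fun x hx => ha0.trans_le hx.1
  have hfa : fα α a L ≤ 0 := by unfold fα; rw [mul_comm a L]; linarith
  have hfb : 0 ≤ fα α b L := by unfold fα; rw [mul_comm b L]; linarith
  obtain ⟨z, hz, hzc⟩ := intermediate_value_Icc hab.le hcont ⟨hfa, hfb⟩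
  exact ⟨z, ha0.trans_le hz.1, hzc⟩

/-- two point interactions in 2D: eigenvalue equations. -/
theorem two_delta_eigenvalue_equations_dim2 (α : ℝ) :
    (∀ s L : ℝ, 0 < s → 0 < L →
      HasDerivAt (fun σ => fα α σ L) (1 / s + L * K1 (s * L)) s ∧
      0 < 1 / s + L * K1 (s * L) ∧
      HasDerivAt (fun Λ => fα α s Λ) (s * K1 (s * L)) L ∧
      0 < s * K1 (s * L)) ∧
    (∀ s L : ℝ, 0 < s → 0 < L →
      HasDerivAt (fun σ => gα α σ L) (1 / s - L * K1 (s * L)) s ∧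
      0 < 1 / s - L * K1 (s * L) ∧
      HasDerivAt (fun Λ => gα α s Λ) (-(s * K1 (s * L))) L ∧
      -(s * K1 (s * L)) < 0) ∧
    (∀ L : ℝ, 0 < L → ∃! s : ℝ, 0 < s ∧ fα α s L = 0) ∧
    (∀ s₁ : ℝ → ℝ, (∀ L : ℝ, 0 < L → 0 < s₁ L ∧ fα α (s₁ L) L = 0) →
      Tendsto s₁ (nhdsWithin 0 (Ioi 0)) atTop ∧
      Tendsto s₁ atTop (nhds (2 * Real.exp (-2 * π * α - eulerMascheroniConstant)))) ∧
    (∀ L : ℝ, 0 < L → L ≤ Real.exp (2 * π * α) →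
      ¬ ∃ s : ℝ, 0 < s ∧ gα α s L = 0) ∧
    (∀ L : ℝ, Real.exp (2 * π * α) < L → ∃! s : ℝ, 0 < s ∧ gα α s L = 0) ∧
    (∀ s₂ : ℝ → ℝ,
      (∀ L : ℝ, Real.exp (2 * π * α) < L → 0 < s₂ L ∧ gα α (s₂ L) L = 0) →
      Tendsto s₂ (nhdsWithin (Real.exp (2 * π * α)) (Ioi (Real.exp (2 * π * α)))) (nhds 0) ∧
      Tendsto s₂ atTop (nhds (2 * Real.exp (-2 * π * α - eulerMascheroniConstant)))) := by
  refine ⟨fun s L hs hL => ?_, fun s L hs hL => ?_, fun L hL => ?_, fun s₁ h₁ => ⟨?_, ?_⟩,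
    fun L hL hle => ?_, fun L hlt => ?_, fun s₂ h₂ => ⟨?_, ?_⟩⟩
  · have hK := K1_pos (mul_pos hs hL)
    refine ⟨f_deriv α hs hL, by positivity, ?_, by positivity⟩
    refine ((K0_deriv_L hs hL).const_sub _).congr_deriv ?_
    ring
  · have hK := K1_pos (mul_pos hs hL)
    refine ⟨((log_half_deriv hs _).add (K0_deriv_s hs hL)).congr_deriv (by ring), ?_,
      (K0_deriv_L hs hL).const_add _, by have := mul_pos hs hK; linarith⟩
    have h := zK1_lt (mul_pos hs hL)
    rw [sub_pos, lt_div_iff₀ hs]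
    linarith
  · obtain ⟨s, hs, hf⟩ := f_exists α hL
    refine ⟨s, ⟨hs, hf⟩, fun t ht => ?_⟩
    exact (f_mono α hL).injOn ht.1 hs (by simp only [ht.2, hf])
  · refine tendsto_atTop.2 fun M => ?_
    set m := max M 1 with hm
    have hm0 : 0 < m := lt_of_lt_of_le one_pos (le_max_right _ _)
    have h0 : Tendsto (fun L : ℝ => K0 (m * L)) (𝓝[>] 0) atTop :=
      K0_tendsto_zero.comp (tendsto_mul_zero hm0)
    filter_upwards [self_mem_nhdsWithin, h0.eventually (eventually_gt_atTop
      (2 * π * α + eulerMascheroniConstant + Real.log (m / 2)))] with L hL hK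
    obtain ⟨hp, hf⟩ := h₁ L hL
    have hlt : fα α m L < fα α (s₁ L) L := by rw [hf]; unfold fα; linarith
    have := ((f_mono α hL).lt_iff_lt hm0 hp).1 hlt
    exact (le_max_left M 1).trans this.le
  · have hc : 0 < 2 * Real.exp (-2 * π * α - eulerMascheroniConstant) := by positivity
    have hs : ∀ L, 0 < L → s₁ L = 2 * Real.exp (-2 * π * α - eulerMascheroniConstant
        - (-K0 (s₁ L * L))) := fun L hL => by
      obtain ⟨hp, hf⟩ := h₁ L hL
      refine solve_eq α hp ?_
      rw [← hf]; unfold fα; ring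
    have hinf : Tendsto (fun L => s₁ L * L) atTop atTop := by
      refine tendsto_atTop_mono' _ ?_ (tendsto_id.const_mul_atTop hc)
      filter_upwards [eventually_gt_atTop 0] with L hL
      have hp := (h₁ L hL).1
      have hK := K0_pos (mul_pos hp hL)
      refine mul_le_mul_of_nonneg_right ?_ hL.le
      rw [hs L hL]
      refine mul_le_mul_of_nonneg_left (Real.exp_le_exp.2 ?_) two_pos.le
      linarith
    have hK := (K0_tendsto_atTop.comp hinf).neg
    have h := ((hK.const_sub (-2 * π * α - eulerMascheroniConstant)).rexp).const_mul 2
    rw [neg_zero, sub_zero] at h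
    refine h.congr' ?_
    filter_upwards [eventually_gt_atTop 0] with L hL
    exact (hs L hL).symm
  · rintro ⟨s, hs, hg⟩
    rw [g_eq α hs hL] at hg
    have h1 := HH_pos (mul_pos hs hL)
    have h2 : Real.log L ≤ 2 * π * α := (Real.log_le_iff_le_exp hL).2 hle
    linarith
  · have hL : 0 < L := (Real.exp_pos _).trans hlt
    have h2 : 2 * π * α < Real.log L := (Real.lt_log_iff_exp_lt hL).2 hlt
    obtain ⟨z, hz, hzc⟩ := HH_surj (sub_pos.2 h2)
    have hs : 0 < z / L := by positivity
    refine ⟨z / L, ⟨hs, ?_⟩, fun t ht => ?_⟩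
    · rw [g_eq α hs hL, div_mul_cancel₀ _ hL.ne', hzc, sub_self]
    · have h3 := ht.2
      rw [g_eq α ht.1 hL] at h3
      have h4 : HH (t * L) = HH z := by rw [hzc]; linarith
      have h5 := HH_mono.injOn (mul_pos ht.1 hL : t * L ∈ Ioi (0 : ℝ)) hz h4
      rw [← h5, mul_div_cancel_right₀ _ hL.ne']
  · set E := Real.exp (2 * π * α) with hE
    have hE0 : 0 < E := Real.exp_pos _
    have hlog : Tendsto (fun L => Real.log L - 2 * π * α) (𝓝[>] E) (𝓝 0) := by
      have h := (Real.continuousAt_log hE0.ne').tendsto.sub_const (2 * π * α)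
      have h' : Real.log E - 2 * π * α = 0 := by rw [hE, Real.log_exp, sub_self]
      rw [h'] at h
      exact h.mono_left nhdsWithin_le_nhds
    rw [tendsto_order]
    refine ⟨fun a ha => ?_, fun ε hε => ?_⟩
    · filter_upwards [self_mem_nhdsWithin] with L hL
      exact ha.trans (h₂ L hL).1
    · filter_upwards [self_mem_nhdsWithin,
        hlog.eventually (Iio_mem_nhds (HH_pos (mul_pos hε hE0)))] with L hL hlt
      have hL : E < L := hL
      have hL0 := hE0.trans hL
      obtain ⟨hp, hg⟩ := h₂ L hL
      rw [g_eq α hp hL0] at hg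
      have hlt : Real.log L - 2 * π * α < HH (ε * E) := hlt
      have h3 : HH (s₂ L * L) < HH (ε * E) := by linarith
      have h4 := (HH_mono.lt_iff_lt (mul_pos hp hL0) (mul_pos hε hE0)).1 h3
      have h5 : ε * E < ε * L := mul_lt_mul_of_pos_left hL hε
      exact lt_of_mul_lt_mul_right (h4.trans h5) hL0.le
  · have hs : ∀ L, Real.exp (2 * π * α) < L → s₂ L = 2 * Real.exp (-2 * π * α
        - eulerMascheroniConstant - K0 (s₂ L * L)) := fun L hL => by
      obtain ⟨hp, hg⟩ := h₂ L hL
      exact solve_eq α hp hg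
    have hinf : Tendsto (fun L => s₂ L * L) atTop atTop := by
      refine tendsto_atTop.2 fun M => ?_
      have hm0 : 0 < max M 1 := lt_of_lt_of_le one_pos (le_max_right _ _)
      filter_upwards [eventually_gt_atTop (Real.exp (2 * π * α)),
        Real.tendsto_log_atTop.eventually
          (eventually_gt_atTop (2 * π * α + HH (max M 1)))] with L hL hlog
      have hL0 := (Real.exp_pos _).trans hL
      obtain ⟨hp, hg⟩ := h₂ L hL
      rw [g_eq α hp hL0] at hg
      have h3 : HH (max M 1) < HH (s₂ L * L) := by linarith
      have h4 := (HH_mono.lt_iff_lt hm0 (mul_pos hp hL0)).1 h3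
      exact (le_max_left M 1).trans h4.le
    have hK := K0_tendsto_atTop.comp hinf
    have h := ((hK.const_sub (-2 * π * α - eulerMascheroniConstant)).rexp).const_mul 2
    rw [sub_zero] at h
    refine h.congr' ?_
    filter_upwards [eventually_gt_atTop (Real.exp (2 * π * α))] with L hL
    exact (hs L hL).symm

end
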